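/- Let m ≥ 2 and 0 < l < m be integers and Δ > 1. There exists δ > 0, depending only on Δ and m, such that the following holds. Let J be a real 2m×m matrix whose blocks J^0, J^1 are invertible, whose rows satisfy J^0_h = J^1_h for 1 ≤ h ≤ l, and such that Π_j Π^T is Δ-regular for every j ∈ 𝒞, where Π := Π^J. Let D be a 2m×2m diagonal matrix with positive diagonal entries d^0_h = d^1_h =: d_h satisfying d_h ≤ d_{l+1} = d_i for all 1 ≤ h ≤ l < i ≤ m, and set W := {D Π^T Θ̃ ξ : ξ ∈ ℝ^m} ⊆ ℝ^{2m}. Then for every η ∈ W with |η| ≥ 1 there exists an index i with l < i ≤ m such that for all ζ ∈ W with |ζ − η| < δ one has |ζ^0_i| ≥ δ and |ζ^1_i| ≥ δ. -/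

import Mathlib

open MeasureTheory Matrix
open scoped ENNReal NNReal BigOperators

noncomputable section

namespace SBL

/-- The set of corners of the `m`-dimensional cube: functions `{1,…,m} → {0,1}`. -/
abbrev Corner (m : ℕ) := Fin m → Fin 2

/-- Index type for `ℝ^{2m}`: coordinates `x^0_i` (left) and `x^1_i` (right). -/
abbrev Idx (m : ℕ) := Fin m ⊕ Fin m

/-- The coordinate of `ℝ^{2m}` selected by the corner `j` at position `i`. -/
def sel {m : ℕ} (j : Corner m) (i : Fin m) : Idx m :=
  if j i = 0 then Sum.inl i else Sum.inr i

/-- The projection `Π_j : ℝ^{2m} → ℝ^m`, `Π_j x = (x_1^{j(1)},…,x_m^{j(m)})`. -/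
def proj {m : ℕ} (j : Corner m) (x : Idx m → ℝ) : Fin m → ℝ := fun i => x (sel j i)

/-- The projection `Π_j` as an `m × 2m` matrix. -/
def projM {m : ℕ} (j : Corner m) : Matrix (Fin m) (Idx m) ℝ :=
  Matrix.of fun i k => if k = sel j i then 1 else 0

/-- `A_j := Π_j J`, the `m × m` matrix obtained by applying `Π_j` to (the columns of) a
`2m × m` matrix `J`, i.e. selecting rows of `J` according to the corner `j`. -/
def Amat {m : ℕ} (J : Matrix (Idx m) (Fin m) ℝ) (j : Corner m) : Matrix (Fin m) (Fin m) ℝ :=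
  Matrix.of fun i k => J (sel j i) k

/-- Euclidean norm on a finite pi type. -/
def en {ι : Type*} [Fintype ι] (x : ι → ℝ) : ℝ := Real.sqrt (∑ i, (x i) ^ 2)

/-- Operator norm of a matrix with respect to the Euclidean norms. -/
def opNorm {ι κ : Type*} [Fintype ι] [Fintype κ] [DecidableEq κ] (A : Matrix ι κ ℝ) : ℝ :=
  ‖LinearMap.toContinuousLinearMap (Matrix.toEuclideanLin A)‖

/-- `Δ`-regularity of a square matrix: `max(‖A‖, |det A|⁻¹) ≤ Δ` (in particular `det A ≠ 0`). -/
def IsReg {m : ℕ} (Δ : ℝ) (A : Matrix (Fin m) (Fin m) ℝ) : Prop :=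
  opNorm A ≤ Δ ∧ A.det ≠ 0 ∧ |A.det|⁻¹ ≤ Δ

/-- A Calderón–Zygmund kernel of order `n` in `ℝ^m`, given by its multiplier `K̂` on
`ℝ^m ∖ {0}`: it is `n` times continuously differentiable there and satisfies the symbol
estimates `‖D^k K̂(η)‖ ≤ |η|^{-k}` for all `k ≤ n`. -/
def IsCZ {m : ℕ} (n : ℕ) (Khat : (Fin m → ℝ) → ℂ) : Prop :=
  ContDiffOn ℝ n Khat {0}ᶜ ∧
  ∀ k : ℕ, k ≤ n → ∀ η : Fin m → ℝ, η ≠ 0 →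
    ‖iteratedFDerivWithin ℝ k Khat {0}ᶜ η‖ ≤ (en η) ^ (-(k : ℝ))

/-- Fourier transform of a (nice) function on `ℝ^{2m}`. -/
def fourierT {m : ℕ} (φ : (Idx m → ℝ) → ℝ) (ξ : Idx m → ℝ) : ℂ :=
  ∫ x : Idx m → ℝ, Complex.exp (-2 * Real.pi * Complex.I * (∑ k, x k * ξ k)) * (φ x : ℂ)

/-- The principal value `p.v. ∫_{ℝ^{2m}} (∏_j F_j(Π_j x)) K(Πx) dx`, defined as
`∫_{ℝ^m} φ̂(−Π^T η) K̂(η) dη` with `φ = ∏_j F_j ∘ Π_j`. -/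
def pv {m : ℕ} (P : Matrix (Fin m) (Idx m) ℝ) (Khat : (Fin m → ℝ) → ℂ)
    (F : Corner m → (Fin m → ℝ) → ℝ) : ℂ :=
  ∫ η : Fin m → ℝ, fourierT (fun x => ∏ j, F j (proj j x)) (-(P.transpose.mulVec η)) * Khat η

/-- Upper `m×m` block `J^0` of a `2m×m` matrix. -/
def Jb0 {m : ℕ} (J : Matrix (Idx m) (Fin m) ℝ) : Matrix (Fin m) (Fin m) ℝ :=
  J.submatrix Sum.inl id

/-- Lower `m×m` block `J^1` of a `2m×m` matrix. -/
def Jb1 {m : ℕ} (J : Matrix (Idx m) (Fin m) ℝ) : Matrix (Fin m) (Fin m) ℝ :=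
  J.submatrix Sum.inr id

/-- `Π^J := (I, −J^0 (J^1)⁻¹)`. -/
def PiJ {m : ℕ} (J : Matrix (Idx m) (Fin m) ℝ) : Matrix (Fin m) (Idx m) ℝ :=
  Matrix.fromCols 1 (-(Jb0 J * (Jb1 J)⁻¹))

/-- The dyadic cube with parameters `Q = (k, n)`: `∏_i [2^k n_i, 2^k (n_i+1))`. -/
def dC {m : ℕ} (Q : ℤ × (Fin m → ℤ)) : Set (Fin m → ℝ) :=
  {x | ∀ i, (2:ℝ)^Q.1 * (Q.2 i : ℝ) ≤ x i ∧ x i < (2:ℝ)^Q.1 * ((Q.2 i : ℝ) + 1)}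

/-- `Q*`: the cube with the same center as `Q` and three times the side length. -/
def dCstar {m : ℕ} (Q : ℤ × (Fin m → ℤ)) : Set (Fin m → ℝ) :=
  {x | ∀ i, (2:ℝ)^Q.1 * ((Q.2 i : ℝ) - 1) ≤ x i ∧ x i < (2:ℝ)^Q.1 * ((Q.2 i : ℝ) + 2)}

/-- A (1/2-)sparse collection of dyadic cubes. -/
def IsSparse {m : ℕ} (S : Set (ℤ × (Fin m → ℤ))) : Prop :=
  ∀ Q ∈ S,
    (∑' Q' : {q : ℤ × (Fin m → ℤ) // q ∈ S ∧ dC q ⊆ dC Q}, volume (dC Q'.val)) ≤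
      2 * volume (dC Q)

/-- The average `[F]_S := (|S|⁻¹ ∫_S |F|^{2^{m-1}})^{2^{1-m}}`. -/
def avg {m : ℕ} (S : Set (Fin m → ℝ)) (F : (Fin m → ℝ) → ℝ) : ℝ :=
  (((volume S).toReal)⁻¹ * ∫ x in S, |F x| ^ (2^(m-1) : ℕ)) ^ ((2:ℝ) ^ ((1:ℤ) - (m:ℤ)))

/-- The closed axis-parallel box `∏_i [a_i, b_i]`. -/
def box {m : ℕ} (a b : Fin m → ℝ) : Set (Fin m → ℝ) := {x | ∀ i, a i ≤ x i ∧ x i ≤ b i}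

/-- Reciprocal eccentricity `ε_R = (min_i |I_i|)/(max_i |I_i|)` of the box `∏_i [a_i,b_i]`. -/
def ecc {m : ℕ} (a b : Fin m → ℝ) : ℝ := (⨅ i, (b i - a i)) / (⨆ i, (b i - a i))

/-- Modified strong maximal function evaluated on a set `S`:
`sup { (ε_R^α)^{2^{1-m}} [F]_R : R ∈ ℛ, S ⊆ R }` (as an extended real). -/
def Mal {m : ℕ} (α : ℝ) (F : (Fin m → ℝ) → ℝ) (S : Set (Fin m → ℝ)) : ℝ≥0∞ :=
  ⨆ (a : Fin m → ℝ) (b : Fin m → ℝ) (_ : ∀ i, a i < b i) (_ : S ⊆ box a b),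
    ENNReal.ofReal ((ecc a b ^ α) ^ ((2:ℝ) ^ ((1:ℤ) - (m:ℤ))) * avg (box a b) F)

/-- `M_α(F)(A𝒯) := sup_{Q ∈ 𝒯} M_α(F)(AQ)`. -/
def MalTree {m : ℕ} (α : ℝ) (F : (Fin m → ℝ) → ℝ) (A : Matrix (Fin m) (Fin m) ℝ)
    (T : Set (ℤ × (Fin m → ℤ))) : ℝ≥0∞ :=
  ⨆ Q ∈ T, Mal α F (A.mulVec '' dC Q)

/-- A convex tree of dyadic cubes with top cube `Qt`. -/
def ConvexTree {m : ℕ} (T : Set (ℤ × (Fin m → ℤ))) (Qt : ℤ × (Fin m → ℤ)) : Prop :=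
  Qt ∈ T ∧ (∀ Q ∈ T, dC Q ⊆ dC Qt) ∧
  ∀ Q ∈ T, ∀ Q' : ℤ × (Fin m → ℤ), dC Q ⊆ dC Q' → dC Q' ⊆ dC Qt → Q' ∈ T

/-- The Gaussian `g(x) = e^{−π|x|²}` on `ℝ^{2m}`. -/
def gss {m : ℕ} (x : Idx m → ℝ) : ℝ := Real.exp (-Real.pi * ∑ k, (x k) ^ 2)

/-- The mixed partial derivative `∂^0_i ∂^1_i g`. -/
def ddg {m : ℕ} (i : Fin m) (x : Idx m → ℝ) : ℝ :=
  fderiv ℝ (fun y : Idx m → ℝ => fderiv ℝ gss y (Pi.single (Sum.inl i) (1:ℝ))) x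
    (Pi.single (Sum.inr i) (1:ℝ))

/-- Isotropic `L¹` dilation on `ℝ^{2m}`: `φ_t(x) = t^{-2m} φ(t⁻¹ x)`. -/
def dil {m : ℕ} (t : ℝ) (φ : (Idx m → ℝ) → ℝ) (x : Idx m → ℝ) : ℝ :=
  (t ^ (2*m))⁻¹ * φ (t⁻¹ • x)

/-- Matrix dilation: `φ_D(x) = (det D)⁻¹ φ(D⁻¹ x)`. -/
def dilM {m : ℕ} (D : Matrix (Idx m) (Idx m) ℝ) (φ : (Idx m → ℝ) → ℝ) (x : Idx m → ℝ) : ℝ :=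
  (D.det)⁻¹ * φ (D⁻¹.mulVec x)

/-- The region `Ω_𝒯 = ∪_{Q∈𝒯} Q × (ℓ(Q)/2, ℓ(Q))` in the upper half space. -/
def Omega {m : ℕ} (T : Set (ℤ × (Fin m → ℤ))) : Set ((Fin m → ℝ) × ℝ) :=
  ⋃ Q ∈ T, (dC Q) ×ˢ Set.Ioo ((2:ℝ)^Q.1 / 2) ((2:ℝ)^Q.1)

/-- The localized form `Λ_𝒯((F_j)_j)`. -/
def LambdaT {m : ℕ} (J : Matrix (Idx m) (Fin m) ℝ) (T : Set (ℤ × (Fin m → ℤ)))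
    (c : ℝ → ℂ) (u : Idx m → ℝ) (i : Fin m) (F : Corner m → (Fin m → ℝ) → ℝ) : ℂ :=
  ∫ z in Omega T, c z.2 * Complex.ofReal ((1 + en u ^ (4*m))⁻¹ * (z.2)⁻¹ *
    ∫ x : Idx m → ℝ, (∏ j, F j (proj j x)) * dil z.2 (ddg i) (x - J.mulVec z.1 + z.2 • u))

/-- `T_k := ∪ {Q ∈ 𝒯 : ℓ(Q) = 2^k}`. -/
def Tkset {m : ℕ} (T : Set (ℤ × (Fin m → ℤ))) (k : ℤ) : Set (Fin m → ℝ) :=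
  ⋃ Q ∈ {q ∈ T | q.1 = k}, dC Q

/-- The form `Λ̃_𝒯((F_j)_j)` with localization in the `x` variables. -/
def LambdaTilde {m : ℕ} (J : Matrix (Idx m) (Fin m) ℝ) (T : Set (ℤ × (Fin m → ℤ)))
    (c : ℝ → ℂ) (u : Idx m → ℝ) (i : Fin m) (F : Corner m → (Fin m → ℝ) → ℝ) : ℂ :=
  ∑' k : ℤ, ∫ t in Set.Ioc ((2:ℝ)^(k-1)) ((2:ℝ)^k),
    c t * Complex.ofReal ((1 + en u ^ (4*m))⁻¹ * t⁻¹ *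
      ∫ p : Fin m → ℝ, ∫ x : Idx m → ℝ,
        (∏ j, Set.indicator ((Amat J j).mulVec '' Tkset T k) (F j) (proj j x)) *
          dil t (ddg i) (x - J.mulVec p + t • u))

/-- The form `Λ(𝒯,J,K)((F_j)_j)` from the induction proposition. -/
def LambdaK {m : ℕ} (J : Matrix (Idx m) (Fin m) ℝ) (T : Set (ℤ × (Fin m → ℤ)))
    (K : ℝ → (Idx m → ℝ) → ℂ) (F : Corner m → (Fin m → ℝ) → ℝ) : ℂ :=
  ∑' k : ℤ, ∫ x : Idx m → ℝ,
    Complex.ofReal (∏ j, Set.indicator ((Amat J j).mulVec '' Tkset T k) (F j) (proj j x)) *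
      ∫ t in Set.Ioc ((2:ℝ)^(k-1)) ((2:ℝ)^k), K t x * (t : ℂ)⁻¹

/-- The reflected corner `i∗j`, differing from `j` exactly at position `i`. -/
def istar {m : ℕ} (i : Fin m) (j : Corner m) : Corner m :=
  fun k => if k = i then 1 - j i else j k

/-- The diagonal matrix `Θ̃` with entry 0 at positions `i ≤ l` and 1 at positions `i > l`
(1-based), i.e. 0 for `i < l` and 1 otherwise in 0-based indexing. -/
def Th {m : ℕ} (l : ℕ) : Matrix (Fin m) (Fin m) ℝ :=
  Matrix.diagonal fun i => if (i : ℕ) < l then 0 else 1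

/-- The block diagonal matrix `Θ = diag(Θ̃, Θ̃)`. -/
def ThB {m : ℕ} (l : ℕ) : Matrix (Idx m) (Idx m) ℝ :=
  Matrix.diagonal (Sum.elim (fun i : Fin m => if (i:ℕ) < l then (0:ℝ) else 1)
    (fun i : Fin m => if (i:ℕ) < l then (0:ℝ) else 1))

end SBL

namespace SBL

/-!
Hadamard's inequality in an orthonormal basis whose first vector is `x / |x|` gives
`|det A| |x| ≤ ‖A‖ ^ (m - 1) |A x|`, so a `Δ`-regular matrix satisfies `|x| ≤ Δ ^ m |A x|`.
If each pair of coordinates `y^0_i, y^1_i` of `y = Πᵀ v` had a member of size at most `s`, then a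
corner `j` selecting these members would give `|v| ≤ Δ ^ m |Π_j Πᵀ v| ≤ Δ ^ m √m s`, and hence
`|y| ≤ 2 Δ ^ (m + 1) √m s`. For `η = D Πᵀ w` with `w` supported in the positions where `D` takes its
maximal value `c`, put `v = c w`: then `y` dominates `η` coordinatewise, agrees with it at those
positions, and has `y^0_h = 0` at the other ones. So `|η| ≥ 1` prevents `η^0_i` and `η^1_i` from
containing a small member at every position `i` of the support.
-/

lemma abs_det_le_prod_norm_apply {ι E : Type*} [Fintype ι] [NormedAddCommGroup E]
    [InnerProductSpace ℝ E] (b : OrthonormalBasis ι ℝ E) (T : E →ₗ[ℝ] E) :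
    |LinearMap.det T| ≤ ∏ i, ‖T (b i)‖ := by
  let e := b.reindex (Fintype.equivFin ι)
  have : Fact (Module.finrank ℝ E = Fintype.card ι) :=
    ⟨Module.finrank_eq_card_basis b.toBasis⟩
  have hadamard := e.toBasis.orientation.abs_volumeForm_apply_le (T ∘ e)
  have hdet : e.toBasis.det (T ∘ e) = LinearMap.det T := by
    rw [Module.Basis.det_comp, ← e.coe_toBasis, Module.Basis.det_self, mul_one]
  rw [Orientation.volumeForm_robust _ e rfl, hdet] at hadamard
  refine hadamard.trans_eq (Fintype.prod_equiv (Fintype.equivFin ι).symm _ _ fun i => ?_)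
  simp only [e, Function.comp_apply, OrthonormalBasis.reindex_apply]

lemma abs_det_mul_norm_le {E : Type*} [NormedAddCommGroup E] [InnerProductSpace ℝ E]
    [FiniteDimensional ℝ E] (T : E →L[ℝ] E) (x : E) :
    |T.det| * ‖x‖ ≤ ‖T‖ ^ (Module.finrank ℝ E - 1) * ‖T x‖ := by
  rcases eq_or_ne x 0 with rfl | hx
  · simp only [norm_zero, map_zero, mul_zero, le_refl]
  have : Nontrivial E := ⟨x, 0, hx⟩
  let i₀ : Fin (Module.finrank ℝ E) := ⟨0, Module.finrank_pos⟩
  have hunit : Orthonormal ℝ (({i₀} : Set _).domRestrict fun _ => ‖x‖⁻¹ • x) := by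
    refine ⟨fun _ => ?_, fun i k hik => (hik (Subsingleton.elim i k)).elim⟩
    simpa [Set.domRestrict] using norm_smul_inv_norm (𝕜 := ℝ) hx
  obtain ⟨b, hb⟩ := hunit.exists_orthonormalBasis_extension_of_card_eq (Fintype.card_fin _).symm
  have hTb : ∀ i, ‖T (b i)‖ ≤ ‖T‖ := fun i => by
    simpa only [b.norm_eq_one, mul_one] using T.le_opNorm (b i)
  have hTb₀ : ‖T (b i₀)‖ * ‖x‖ = ‖T x‖ := by
    rw [hb i₀ rfl, map_smul, norm_smul, norm_inv, norm_norm, mul_right_comm,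
      inv_mul_cancel₀ (norm_ne_zero_iff.mpr hx), one_mul]
  calc |T.det| * ‖x‖ ≤ (∏ i, ‖T (b i)‖) * ‖x‖ := by
        gcongr
        exact abs_det_le_prod_norm_apply b T.toLinearMap
    _ = (∏ i ∈ Finset.univ.erase i₀, ‖T (b i)‖) * ‖T x‖ := by
        rw [← Finset.prod_erase_mul _ _ (Finset.mem_univ i₀), mul_assoc, hTb₀]
    _ ≤ (∏ _i ∈ Finset.univ.erase i₀, ‖T‖) * ‖T x‖ := by
        gcongr with i
        exact hTb i
    _ = ‖T‖ ^ (Module.finrank ℝ E - 1) * ‖T x‖ := by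
        rw [Finset.prod_const, Finset.card_erase_of_mem (Finset.mem_univ i₀), Finset.card_fin]

section EuclideanNorm

variable {ι κ : Type*} [Fintype ι] [Fintype κ]

lemma en_eq_norm_toLp (x : ι → ℝ) : en x = ‖WithLp.toLp 2 x‖ := by
  simp only [en, EuclideanSpace.norm_eq, Real.norm_eq_abs, sq_abs]

lemma en_nonneg (x : ι → ℝ) : 0 ≤ en x := Real.sqrt_nonneg _

lemma en_le_en {x y : ι → ℝ} (h : ∀ i, |x i| ≤ |y i|) : en x ≤ en y :=
  Real.sqrt_le_sqrt (Finset.sum_le_sum fun i _ => sq_le_sq.mpr (h i))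

lemma en_const (s : ℝ) : en (fun _ : ι => s) = √(Fintype.card ι) * |s| := by
  rw [en, Finset.sum_const, nsmul_eq_mul, Finset.card_univ, Real.sqrt_mul (Nat.cast_nonneg _),
    Real.sqrt_sq_eq_abs]

lemma abs_apply_le_en (x : ι → ℝ) (i : ι) : |x i| ≤ en x := by
  rw [en_eq_norm_toLp]
  exact PiLp.norm_apply_le (WithLp.toLp 2 x) i

lemma en_le_add_en (x : ι ⊕ κ → ℝ) : en x ≤ en (x ∘ Sum.inl) + en (x ∘ Sum.inr) := by
  simp only [en, Fintype.sum_sum_type, Function.comp_apply]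
  set a := ∑ i, x (Sum.inl i) ^ 2
  set b := ∑ k, x (Sum.inr k) ^ 2
  have ha : 0 ≤ a := Finset.sum_nonneg fun _ _ => sq_nonneg _
  have hb : 0 ≤ b := Finset.sum_nonneg fun _ _ => sq_nonneg _
  refine Real.sqrt_le_iff.mpr ⟨by positivity, ?_⟩
  rw [add_sq, Real.sq_sqrt ha, Real.sq_sqrt hb]
  linarith [show 0 ≤ 2 * √a * √b by positivity]

lemma en_mulVec_le [DecidableEq κ] (A : Matrix ι κ ℝ) (x : κ → ℝ) :
    en (A *ᵥ x) ≤ opNorm A * en x := by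
  rw [en_eq_norm_toLp, en_eq_norm_toLp]
  exact (toEuclideanLin A).toContinuousLinearMap.le_opNorm (WithLp.toLp 2 x)

lemma abs_det_mul_en_le [DecidableEq ι] (A : Matrix ι ι ℝ) (x : ι → ℝ) :
    |A.det| * en x ≤ opNorm A ^ (Fintype.card ι - 1) * en (A *ᵥ x) := by
  have h := abs_det_mul_norm_le (toEuclideanLin A).toContinuousLinearMap (WithLp.toLp 2 x)
  rwa [LinearMap.det_toContinuousLinearMap, LinearMap.det_toLpLin, finrank_euclideanSpace,
    LinearMap.coe_toContinuousLinearMap', toLpLin_apply, ← en_eq_norm_toLp,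
    ← en_eq_norm_toLp] at h

end EuclideanNorm

lemma IsReg.pos {m : ℕ} {Δ : ℝ} {A : Matrix (Fin m) (Fin m) ℝ} (hA : IsReg Δ A) : 0 < Δ :=
  (inv_pos.mpr (abs_pos.mpr hA.2.1)).trans_le hA.2.2

lemma IsReg.en_le {m : ℕ} {Δ : ℝ} {A : Matrix (Fin m) (Fin m) ℝ} (hA : IsReg Δ A)
    (x : Fin m → ℝ) : en x ≤ Δ ^ m * en (A *ᵥ x) := by
  have hΔ : 0 < Δ := hA.pos
  obtain ⟨hop, hdet, hinv⟩ := hA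
  have hdet' : 0 < |A.det| := abs_pos.mpr hdet
  have hop0 : 0 ≤ opNorm A := norm_nonneg _
  have hen : 0 ≤ en (A *ᵥ x) := en_nonneg _
  rcases m.eq_zero_or_pos with rfl | hm
  · simp [en]
  calc en x = |A.det|⁻¹ * (|A.det| * en x) := (inv_mul_cancel_left₀ hdet'.ne' _).symm
    _ ≤ |A.det|⁻¹ * (opNorm A ^ (m - 1) * en (A *ᵥ x)) := by
        refine mul_le_mul_of_nonneg_left ?_ (inv_nonneg.mpr hdet'.le)
        simpa only [Fintype.card_fin] using abs_det_mul_en_le A x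
    _ ≤ Δ * (Δ ^ (m - 1) * en (A *ᵥ x)) := by
        gcongr
    _ = Δ ^ m * en (A *ᵥ x) := by rw [← mul_assoc, mul_pow_sub_one hm.ne']

section Corners

variable {m : ℕ}

lemma projM_mulVec (j : Corner m) (x : Idx m → ℝ) : projM j *ᵥ x = proj j x := by
  ext i
  simp [projM, proj, mulVec, dotProduct]

lemma exists_corner_abs_proj_le {x : Idx m → ℝ} {s : ℝ}
    (h : ∀ i, |x (Sum.inl i)| ≤ s ∨ |x (Sum.inr i)| ≤ s) :
    ∃ j : Corner m, ∀ i, |proj j x i| ≤ s := by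
  have hsel : ∀ i, ∃ a : Fin 2, |x (if a = 0 then Sum.inl i else Sum.inr i)| ≤ s := fun i =>
    (h i).elim (fun h0 => ⟨0, h0⟩) (fun h1 => ⟨1, h1⟩)
  choose j hj using hsel
  exact ⟨j, hj⟩

variable {Δ : ℝ} {P : Matrix (Fin m) (Idx m) ℝ}

lemma en_transpose_mulVec_le (hP : ∀ j : Corner m, IsReg Δ (projM j * Pᵀ)) (v : Fin m → ℝ) :
    en (Pᵀ *ᵥ v) ≤ 2 * Δ * en v := by
  have hproj : ∀ j : Corner m, en (proj j (Pᵀ *ᵥ v)) ≤ Δ * en v := fun j => by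
    rw [← projM_mulVec, mulVec_mulVec]
    exact (en_mulVec_le _ v).trans (mul_le_mul_of_nonneg_right (hP j).1 (en_nonneg v))
  have hsum : en (Pᵀ *ᵥ v) ≤
      en (proj (fun _ => 0) (Pᵀ *ᵥ v)) + en (proj (fun _ => 1) (Pᵀ *ᵥ v)) :=
    en_le_add_en _
  linarith [hproj fun _ => 0, hproj fun _ => 1]

lemma en_transpose_mulVec_le_of_small_coordinates
    (hP : ∀ j : Corner m, IsReg Δ (projM j * Pᵀ)) {v : Fin m → ℝ} {s : ℝ} (hs : 0 ≤ s)
    (hsmall : ∀ i, |(Pᵀ *ᵥ v) (Sum.inl i)| ≤ s ∨ |(Pᵀ *ᵥ v) (Sum.inr i)| ≤ s) :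
    en (Pᵀ *ᵥ v) ≤ 2 * Δ ^ (m + 1) * √m * s := by
  obtain ⟨j, hj⟩ := exists_corner_abs_proj_le hsmall
  have hΔ : 0 < Δ := (hP j).pos
  have hproj : en (proj j (Pᵀ *ᵥ v)) ≤ √m * s := by
    refine (en_le_en fun i => (hj i).trans (le_abs_self s)).trans_eq ?_
    rw [en_const, Fintype.card_fin, abs_of_nonneg hs]
  calc en (Pᵀ *ᵥ v) ≤ 2 * Δ * en v := en_transpose_mulVec_le hP v
    _ ≤ 2 * Δ * (Δ ^ m * en (proj j (Pᵀ *ᵥ v))) := by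
        gcongr
        simpa only [← mulVec_mulVec, projM_mulVec] using (hP j).en_le v
    _ ≤ 2 * Δ * (Δ ^ m * (√m * s)) := by gcongr
    _ = 2 * Δ ^ (m + 1) * √m * s := by ring

variable {B : Matrix (Fin m) (Fin m) ℝ} {S : Set (Fin m)} {d : Fin m → ℝ} {c : ℝ}

lemma en_diagonal_mulVec_le_of_small_coordinates
    (hB : ∀ j : Corner m, IsReg Δ (projM j * (fromCols 1 B)ᵀ))
    (hd : ∀ h, |d h| ≤ c) (hdS : ∀ i ∈ S, d i = c) {w : Fin m → ℝ} (hw : ∀ h ∉ S, w h = 0)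
    {η : Idx m → ℝ} (hη : η = diagonal (Sum.elim d d) *ᵥ ((fromCols 1 B)ᵀ *ᵥ w))
    {s : ℝ} (hs : 0 ≤ s) (hsmall : ∀ i ∈ S, |η (Sum.inl i)| ≤ s ∨ |η (Sum.inr i)| ≤ s) :
    en η ≤ 2 * Δ ^ (m + 1) * √m * s := by
  set y : Idx m → ℝ := (fromCols 1 B)ᵀ *ᵥ (c • w) with hy
  have hηy : ∀ k, |η k| ≤ |y k| := fun k => by
    have hdk : |Sum.elim d d k| ≤ |c| := by
      cases k <;> exact (hd _).trans (le_abs_self c)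
    rw [hη, hy, mulVec_diagonal, mulVec_smul, Pi.smul_apply, smul_eq_mul, abs_mul, abs_mul]
    gcongr
  have hy_of_mem : ∀ i ∈ S, y (Sum.inl i) = η (Sum.inl i) ∧ y (Sum.inr i) = η (Sum.inr i) :=
    fun i hi => by simp only [hη, hy, mulVec_diagonal, mulVec_smul, Pi.smul_apply, smul_eq_mul,
      Sum.elim_inl, Sum.elim_inr, hdS i hi, and_self]
  have hy_of_notMem : ∀ h ∉ S, y (Sum.inl h) = 0 := fun h hh => by
    simp [hy, transpose_fromCols, fromRows_mulVec, hw h hh]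
  refine (en_le_en hηy).trans (en_transpose_mulVec_le_of_small_coordinates hB hs fun i => ?_)
  by_cases hi : i ∈ S
  · rw [← hy, (hy_of_mem i hi).1, (hy_of_mem i hi).2]
    exact hsmall i hi
  · rw [← hy, hy_of_notMem i hi, abs_zero]
    exact Or.inl hs

end Corners

lemma le_abs_apply_of_en_sub_lt {ι : Type*} [Fintype ι] {ζ η : ι → ℝ} {δ : ℝ} {k : ι}
    (hη : 2 * δ < |η k|) (hζ : en (ζ - η) < δ) : δ ≤ |ζ k| := by
  have hdiff : |ζ k - η k| < δ := (abs_apply_le_en (ζ - η) k).trans_lt hζ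
  linarith [abs_sub_abs_le_abs_sub (η k) (ζ k), abs_sub_comm (η k) (ζ k)]

theorem statement14_general {m : ℕ} {Δ : ℝ} (hΔ : 0 ≤ Δ) :
    ∃ δ : ℝ, 0 < δ ∧ ∀ B : Matrix (Fin m) (Fin m) ℝ,
      (∀ j : Corner m, IsReg Δ (projM j * (fromCols 1 B)ᵀ)) →
      ∀ (S : Set (Fin m)) (d : Fin m → ℝ) (c : ℝ),
      (∀ h, |d h| ≤ c) → (∀ i ∈ S, d i = c) →
      ∀ w : Fin m → ℝ, (∀ h ∉ S, w h = 0) →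
      ∀ η, η = diagonal (Sum.elim d d) *ᵥ ((fromCols 1 B)ᵀ *ᵥ w) → 1 ≤ en η →
        ∃ i ∈ S, ∀ ζ, en (ζ - η) < δ → δ ≤ |ζ (Sum.inl i)| ∧ δ ≤ |ζ (Sum.inr i)| := by
  set C : ℝ := 2 * Δ ^ (m + 1) * √m
  have hC0 : 0 ≤ C := by positivity
  set δ : ℝ := (2 * (C + 1))⁻¹ with hδ
  have hδ0 : 0 < δ := by positivity
  have hCδ : C * (2 * δ) < 1 := by
    rw [hδ]
    field_simp
    linarith
  refine ⟨δ, hδ0, fun B hB S d c hd hdS w hw η hη hη1 => ?_⟩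
  obtain ⟨i, hi, h0, h1⟩ : ∃ i ∈ S, 2 * δ < |η (Sum.inl i)| ∧ 2 * δ < |η (Sum.inr i)| := by
    by_contra! hsmall
    have : en η ≤ C * (2 * δ) :=
      en_diagonal_mulVec_le_of_small_coordinates hB hd hdS hw hη (by positivity)
        fun i hi => or_iff_not_imp_left.mpr fun h => hsmall i hi (not_le.mp h)
    linarith
  exact ⟨i, hi, fun ζ hζ => ⟨le_abs_apply_of_en_sub_lt h0 hζ, le_abs_apply_of_en_sub_lt h1 hζ⟩⟩

/-- Lemma 5.3 (uniform lower bounds on coordinates on the cone `W`). -/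
theorem statement14 (m l : ℕ) (hm : 2 ≤ m) (hl0 : 0 < l) (hlm : l < m)
    (Δ : ℝ) (hΔ : 1 < Δ) :
    ∃ δ : ℝ, 0 < δ ∧ ∀ J : Matrix (Idx m) (Fin m) ℝ,
      IsUnit (Jb0 J).det → IsUnit (Jb1 J).det →
      (∀ h : Fin m, (h:ℕ) < l → ∀ k, J (Sum.inl h) k = J (Sum.inr h) k) →
      (∀ j : Corner m, IsReg Δ (projM j * (PiJ J).transpose)) →
      ∀ d : Fin m → ℝ, (∀ h, 0 < d h) →
      (∀ h i : Fin m, (h:ℕ) < l → l ≤ (i:ℕ) → d h ≤ d i) →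
      (∀ i i' : Fin m, l ≤ (i:ℕ) → l ≤ (i':ℕ) → d i = d i') →
      ∀ η ∈ Set.range (fun ξ : Fin m → ℝ =>
          (Matrix.diagonal (Sum.elim d d)).mulVec
            ((PiJ J).transpose.mulVec ((Th l).mulVec ξ))),
        1 ≤ en η →
        ∃ i : Fin m, l ≤ (i:ℕ) ∧
          ∀ ζ ∈ Set.range (fun ξ : Fin m → ℝ =>
              (Matrix.diagonal (Sum.elim d d)).mulVec
                ((PiJ J).transpose.mulVec ((Th l).mulVec ξ))),
            en (ζ - η) < δ → δ ≤ |ζ (Sum.inl i)| ∧ δ ≤ |ζ (Sum.inr i)| := by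
  obtain ⟨δ, hδ, general⟩ := statement14_general (m := m) (zero_le_one.trans hΔ.le)
  refine ⟨δ, hδ, fun J _ _ _ hreg d hd hle heq η ⟨ξ, hξ⟩ hη => ?_⟩
  have hmax : ∀ h, |d h| ≤ d ⟨l, hlm⟩ := fun h => (abs_of_pos (hd h)).trans_le <|
    (lt_or_ge (h : ℕ) l).elim (hle h _ · le_rfl) fun hh => (heq h _ hh le_rfl).le
  obtain ⟨i, hi, hζ⟩ := general _ hreg {i | l ≤ (i : ℕ)} d _ hmax (fun i hi => heq i _ hi le_rfl)
    (Th l *ᵥ ξ) (fun h hh => by simp_all [Th, mulVec_diagonal]) η hξ.symm hη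
  exact ⟨i, hi, fun ζ _ => hζ ζ⟩

end SBL
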